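/- For every cardinal number α ≥ 𝔠, there exists a metrizable topological space X with |X| = α such that every quasiordered set (Q, ≤) with |Q| ≤ α has a representation by clopen subspaces of X with respect to embeddability; that is, there is a family {X(q) : q ∈ Q} of pairwise non-homeomorphic clopen subsets of X such that q ≤ q' if and only if X(q) is homeomorphicenable to a subspace of X(q') (i.e., there exists a topological embedding of X(q) into X(q')). -/

import Mathlib

universe u

open Cardinal

/-- `A` is homeomorphic to a (not necessarily special) subspace of `B`, i.e. there is a
topological embedding of `A` into `B`. -/
def HomeoToSubspace (A : Type*) [TopologicalSpace A]
    (B : Type*) [TopologicalSpace B] : Prop :=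
  ∃ t : Set B, Nonempty (A ≃ₜ t)

/-- The representation property of the space `X` for a quasiorder, with respect to
embeddability. -/
def RepresentsByEmb (α : Cardinal.{u}) (X : Type u) [TopologicalSpace X] : Prop :=
  ∀ (Q : Type u) (le : Q → Q → Prop), #Q ≤ α →
    (∀ q, le q q) → (∀ a b c, le a b → le b c → le a c) →
    ∃ Xq : Q → Set X,
      (∀ q, IsClopen (Xq q)) ∧
      (∀ q q', q ≠ q' → IsEmpty ((Xq q) ≃ₜ (Xq q'))) ∧
      (∀ q q', le q q' ↔ HomeoToSubspace (Xq q) (Xq q'))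

/-! A well-founded linear order whose `ω`-limits carry chosen ladders has no nontrivial self-map
preserving the order and the ladders. Encoding this structure together with a marked element by
connected graphs, in which cliques of size `8` name the basic relations, gives for every infinite
cardinal `α` an antichain, under subgraph embeddability, of `α` connected graphs on at most `α`
vertices.

Each of these graphs is turned into a metrizable space by gluing in a plane for every edge. Apart
from countably many points, an injectively embedded plane stays inside one of the glued planes, so
an embedding between such spaces that carries vertices to vertices yields an embedding of graphs.
Vertices are forced to go to vertices by attaching uncountably many further planes to each of them.

Every graph `p` is used in two flavours, `(p, true)` and `(p, false)`, which embed into each other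
but are not homeomorphic, as only the first has copies of `ℚ` attached. If `q` of `Q` is assigned
the graph `ι q`, then `q` is represented by the sum of the spaces of `ι r`, `r ≤ q`, where the
flavour is `true` for `r = q` alone. Without the flavours equivalent elements of `Q` would get
homeomorphic spaces.
-/

section Rigidity

open Set

variable {A : Type u} [LinearOrder A]

/-- Limits of cofinality `ω` in a linear order, bundled. -/
abbrev OmegaLimit (A : Type u) [LinearOrder A] : Type u :=
  {l : A // ∃ s : ℕ → A, StrictMono s ∧ IsLUB (range s) l}

namespace OmegaLimit

/-- An arbitrarily chosen strictly increasing sequence converging to an `ω`-limit. -/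
noncomputable def ladder (l : OmegaLimit A) : ℕ → A := l.2.choose

lemma strictMono_ladder (l : OmegaLimit A) : StrictMono l.ladder := l.2.choose_spec.1

lemma isLUB_ladder (l : OmegaLimit A) : IsLUB (range l.ladder) l.1 := l.2.choose_spec.2

lemma ladder_lt (l : OmegaLimit A) (n : ℕ) : l.ladder n < l.1 :=
  (l.strictMono_ladder n.lt_succ_self).trans_le (l.isLUB_ladder.1 ⟨_, rfl⟩)

lemma ladder_lt_succ (l : OmegaLimit A) (n : ℕ) : l.ladder n < l.ladder (n + 1) :=
  l.strictMono_ladder n.lt_succ_self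

end OmegaLimit

lemma exists_isLUB_of_wellFoundedLT [WellFoundedLT A] [OrderTop A] (s : Set A) :
    ∃ m, IsLUB s m := by
  obtain ⟨m, hm, hmin⟩ := wellFounded_lt.has_min (upperBounds s) ⟨⊤, fun _ _ => le_top⟩
  exact ⟨m, hm, fun y hy => not_lt.1 (hmin y hy)⟩

/-- If `x < f x`, then the supremum of the orbit of `x` is a fixed limit, so its ladder is fixed
pointwise; but a rung above `x` would have to move along with the orbit. -/
theorem eq_self_of_strictMono_of_map_ladder [WellFoundedLT A] [OrderTop A] {f : A → A}
    (hf : StrictMono f)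
    (hladder : ∀ l : OmegaLimit A, ∃ l' : OmegaLimit A,
      f l.1 = l'.1 ∧ ∀ n, f (l.ladder n) = l'.ladder n) (x : A) :
    f x = x := by
  by_contra hx
  have horbit : StrictMono fun k => f^[k] x :=
    hf.strictMono_iterate_of_lt_map (lt_of_le_of_ne hf.le_apply (Ne.symm hx))
  obtain ⟨m, hm⟩ := exists_isLUB_of_wellFoundedLT (range fun k => f^[k] x)
  have orbit_lt (k : ℕ) : f^[k] x < m :=
    (horbit k.lt_succ_self).trans_le (hm.1 ⟨_, rfl⟩)
  let l : OmegaLimit A := ⟨m, _, horbit, hm⟩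
  obtain ⟨l', hl', hrung⟩ := hladder l
  have hfixed : l' = l := by
    refine Subtype.ext (hl'.symm.trans (le_antisymm ?_ hf.le_apply))
    rw [hl']
    refine l'.isLUB_ladder.2 ?_
    rintro _ ⟨n, rfl⟩
    obtain ⟨_, ⟨k, rfl⟩, hk⟩ := (lt_isLUB_iff hm).1 (l.ladder_lt n)
    calc l'.ladder n = f (l.ladder n) := (hrung n).symm
      _ ≤ f^[k + 1] x := by rw [Function.iterate_succ_apply']; exact (hf hk).le
      _ ≤ m := (orbit_lt _).le
  rw [hfixed] at hrung
  obtain ⟨_, ⟨n, rfl⟩, hn⟩ := (lt_isLUB_iff l.isLUB_ladder).1 (orbit_lt 0)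
  have orbit_le (k : ℕ) : f^[k] x ≤ l.ladder n := by
    rw [← Function.iterate_fixed (hrung n) k]
    exact ((hf.iterate k) hn).le
  exact (l.ladder_lt n).not_ge (hm.2 (by rintro _ ⟨k, rfl⟩; exact orbit_le k))

end Rigidity

section CliqueGraph

open Function
open scoped SimpleGraph

variable {A A' E E' ι : Type*}

/-- The graph on `A ⊕ E × ι` that encodes the `ι`-ary tuples `att e` of elements of `A`: each `e`
contributes a clique indexed by `ι`, whose `i`-th vertex is joined to `att e i`. -/
def cliqueGraph (att : E → ι → A) : SimpleGraph (A ⊕ E × ι) where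
  Adj
    | .inl _, .inl _ => False
    | .inl a, .inr (e, i) => att e i = a
    | .inr (e, i), .inl a => att e i = a
    | .inr (e, i), .inr (e', j) => e = e' ∧ i ≠ j
  symm := ⟨by
    rintro (a | ⟨e, i⟩) (a' | ⟨e', i'⟩) h
    exacts [h, h, h, ⟨h.1.symm, h.2.symm⟩]⟩
  loopless := ⟨by rintro (a | ⟨e, i⟩) h; exacts [h, h.2 rfl]⟩

/-- The number of times the element `a` occurs in the tuple `att e`. -/
noncomputable def occurrences (att : E → ι → A) (e : E) (a : A) : ℕ :=
  Nat.card {i // att e i = a}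

lemma occurrences_map_eq {att : E → ι → A} {att' : E' → ι → A'} {φ : A → A'} (hφ : Injective φ)
    {e : E} {e' : E'} (π : Equiv.Perm ι) (h : ∀ i, φ (att e i) = att' e' (π i)) (a : A) :
    occurrences att' e' (φ a) = occurrences att e a :=
  (Nat.card_congr (π.subtypeEquiv fun i => by rw [← h, hφ.eq_iff])).symm

variable [Finite ι] [Nontrivial ι] {att : E → ι → A} {att' : E' → ι → A'}

lemma cliqueGraph_clique_ne_inl (hatt : ∀ e a, occurrences att e a + 1 < Nat.card ι)
    {g : ι → A ⊕ E × ι} (hg : Pairwise fun i j => (cliqueGraph att).Adj (g i) (g j))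
    (i₀ : ι) (a : A) : g i₀ ≠ .inl a := by
  intro h₀
  have hother (i : {i // i ≠ i₀}) : ∃ e j, g i = .inr (e, j) ∧ att e j = a := by
    have hadj : (cliqueGraph att).Adj (g i) (g i₀) := hg i.2
    rw [h₀] at hadj
    rcases h : g i with b | ⟨e, j⟩
    · rw [h] at hadj; exact hadj.elim
    · rw [h] at hadj; exact ⟨e, j, rfl, hadj⟩
  choose e j hgj hattj using hother
  obtain ⟨i₁, hi₁⟩ := exists_ne i₀
  have he (i : {i // i ≠ i₀}) : e i = e ⟨i₁, hi₁⟩ := by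
    by_cases hi : i.1 = i₁
    · rw [show i = ⟨i₁, hi₁⟩ from Subtype.ext hi]
    · have hadj : (cliqueGraph att).Adj (g i) (g i₁) := hg hi
      rw [hgj, hgj ⟨i₁, hi₁⟩] at hadj
      exact hadj.1
  have hj : Injective fun i => (⟨j i, he i ▸ hattj i⟩ : {j // att (e ⟨i₁, hi₁⟩) j = a}) := by
    intro i i' h
    by_contra hne
    have hadj : (cliqueGraph att).Adj (g i) (g i') := hg (Subtype.coe_ne_coe.2 hne)
    rw [hgj, hgj i'] at hadj
    exact hadj.2 (congrArg Subtype.val h)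
  have hcard := Nat.card_le_card_of_injective _ hj
  have hcompl : Nat.card {i // i ≠ i₀} + 1 = Nat.card ι := by
    classical
    have := Fintype.ofFinite ι
    have := Fintype.card_pos_iff.2 ⟨i₀⟩
    simp only [Nat.card_eq_fintype_card, ne_eq, Fintype.card_subtype_compl,
      Fintype.card_unique]
    omega
  have := hatt (e ⟨i₁, hi₁⟩) a
  unfold occurrences at this
  omega

lemma exists_perm_of_clique (hatt : ∀ e a, occurrences att e a + 1 < Nat.card ι)
    {g : ι → A ⊕ E × ι} (hg : Pairwise fun i j => (cliqueGraph att).Adj (g i) (g j)) :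
    ∃ (e : E) (π : Equiv.Perm ι), ∀ i, g i = .inr (e, π i) := by
  have hinr (i : ι) : ∃ y, g i = .inr y := by
    rcases h : g i with a | y
    · exact (cliqueGraph_clique_ne_inl hatt hg i a h).elim
    · exact ⟨y, rfl⟩
  choose y hy using hinr
  have hadj {i j : ι} (hij : i ≠ j) : (y i).1 = (y j).1 ∧ (y i).2 ≠ (y j).2 := by
    have hadj : (cliqueGraph att).Adj (g i) (g j) := hg hij
    rwa [hy, hy] at hadj
  obtain ⟨i₀⟩ : Nonempty ι := inferInstance
  have hinj : Injective fun i => (y i).2 := fun i j h => by_contra fun hij => (hadj hij).2 h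
  refine ⟨(y i₀).1, .ofBijective _ (Finite.injective_iff_bijective.1 hinj), fun i => ?_⟩
  rw [hy]
  by_cases hi : i = i₀
  · rw [hi]; rfl
  · rw [← (hadj hi).1]; rfl

theorem exists_map_att_of_copy (hatt' : ∀ e a, occurrences att' e a + 1 < Nat.card ι)
    (f : SimpleGraph.Copy (cliqueGraph att) (cliqueGraph att')) (e : E) :
    ∃ (e' : E') (π : Equiv.Perm ι), ∀ i, f (.inl (att e i)) = .inl (att' e' (π i)) := by
  obtain ⟨e', π, hπ⟩ := exists_perm_of_clique hatt' (g := fun i => f (.inr (e, i)))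
    fun i j hij => f.toHom.map_adj ⟨rfl, hij⟩
  refine ⟨e', π, fun i => ?_⟩
  have hadj : (cliqueGraph att').Adj (f (.inl (att e i))) (f (.inr (e, i))) :=
    f.toHom.map_adj (show att e i = att e i from rfl)
  rw [hπ] at hadj
  rcases h : f (.inl (att e i)) with a | ⟨e₁, j⟩
  · rw [h] at hadj
    exact congrArg Sum.inl (show att' e' (π i) = a from hadj).symm
  · rw [h] at hadj
    obtain ⟨rfl, -⟩ := hadj
    have hcollide : f (.inl (att e i)) = f (.inr (e, π.symm j)) := by
      rw [h, hπ, π.apply_symm_apply]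
    exact (Sum.inl_ne_inr (f.injective hcollide)).elim

theorem exists_injective_of_copy (hatt' : ∀ e a, occurrences att' e a + 1 < Nat.card ι)
    (hcover : ∀ a, ∃ e i, att e i = a)
    (h : cliqueGraph att ⊑ cliqueGraph att') :
    ∃ φ : A → A', Injective φ ∧
      ∀ e, ∃ e', ∀ a, occurrences att' e' (φ a) = occurrences att e a := by
  obtain ⟨f⟩ := h
  have hinl (a : A) : ∃ a', f (.inl a) = .inl a' := by
    obtain ⟨e, i, rfl⟩ := hcover a
    obtain ⟨e', π, h⟩ := exists_map_att_of_copy hatt' f e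
    exact ⟨_, h i⟩
  choose φ hφ using hinl
  have hinj : Injective φ := fun a b h =>
    Sum.inl_injective (f.injective (show f (.inl a) = f (.inl b) by rw [hφ, hφ, h]))
  refine ⟨φ, hinj, fun e => ?_⟩
  obtain ⟨e', π, h⟩ := exists_map_att_of_copy hatt' f e
  exact ⟨e', occurrences_map_eq hinj π fun i => Sum.inl_injective (by rw [← hφ, h])⟩

end CliqueGraph

section LadderGraph

open Function
open scoped SimpleGraph

variable {A : Type u} [LinearOrder A]

/-- Names for the tuples that record the order of `A`, its ladders (the first rung, and each pair
of consecutive rungs), and one marked element. -/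
inductive Gadget (A : Type u) [LinearOrder A] : Type u
  | lt (x y : A) (h : x < y)
  | first (l : OmegaLimit A)
  | step (l : OmegaLimit A) (n : ℕ)
  | mark

namespace Gadget

/-- The tuple named by a gadget when `p` is the marked element. The multiplicities are chosen so
that they determine the kind of the gadget and, apart from `mark`, the role of each entry. -/
noncomputable def entries [OrderTop A] (p : A) : Gadget A → Fin 8 → A
  | lt x y _ => ![x, x, y, y, y, y, y, y]
  | first l => ![l.1, l.1, l.1, l.ladder 0, l.ladder 0, l.ladder 0, l.ladder 0, l.ladder 0]
  | step l n => ![l.1, l.ladder n, l.ladder n, l.ladder (n + 1), l.ladder (n + 1),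
      l.ladder (n + 1), l.ladder (n + 1), l.ladder (n + 1)]
  | mark => ![p, p, p, p, ⊤, ⊤, ⊤, ⊤]

section Occurrences

variable [OrderTop A] {p : A}

lemma occurrences_eq_sum (e : Gadget A) (a : A) :
    occurrences (entries p) e a = ∑ i, if entries p e i = a then 1 else 0 := by
  rw [occurrences, Nat.card_eq_fintype_card, Fintype.card_subtype, Finset.card_filter]

lemma occurrences_lt {x y : A} (h : x < y) (a : A) : occurrences (entries p) (lt x y h) a =
    2 * (if x = a then 1 else 0) + 6 * (if y = a then 1 else 0) := by
  rw [occurrences_eq_sum, Fin.sum_univ_eight]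
  simp only [entries, Matrix.cons_val]
  grind

lemma occurrences_first (l : OmegaLimit A) (a : A) : occurrences (entries p) (first l) a =
    3 * (if l.1 = a then 1 else 0) + 5 * (if l.ladder 0 = a then 1 else 0) := by
  rw [occurrences_eq_sum, Fin.sum_univ_eight]
  simp only [entries, Matrix.cons_val]
  grind

lemma occurrences_step (l : OmegaLimit A) (n : ℕ) (a : A) :
    occurrences (entries p) (step l n) a = (if l.1 = a then 1 else 0) +
      2 * (if l.ladder n = a then 1 else 0) + 5 * (if l.ladder (n + 1) = a then 1 else 0) := by
  rw [occurrences_eq_sum, Fin.sum_univ_eight]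
  simp only [entries, Matrix.cons_val]
  grind

lemma occurrences_mark (a : A) : occurrences (entries p) mark a =
    4 * (if p = a then 1 else 0) + 4 * (if ⊤ = a then 1 else 0) := by
  rw [occurrences_eq_sum, Fin.sum_univ_eight]
  simp only [entries, Matrix.cons_val]
  grind

lemma occurrences_le_six (hp : p ≠ ⊤) (e : Gadget A) (a : A) :
    occurrences (entries p) e a ≤ 6 := by
  rcases e with ⟨x, y, h⟩ | l | ⟨l, n⟩ | _
  · grind [occurrences_lt]
  · grind [occurrences_first, l.ladder_lt 0]
  · grind [occurrences_step, l.ladder_lt n, l.ladder_lt (n + 1), l.ladder_lt_succ n]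
  · grind [occurrences_mark]

lemma eq_lt_of_occurrences_eq_six {e : Gadget A} {a : A}
    (he : occurrences (entries p) e a = 6) : ∃ x h, e = lt x a h := by
  rcases e with ⟨x, y, h⟩ | l | ⟨l, n⟩ | _
  · grind [occurrences_lt]
  · grind [occurrences_first]
  · grind [occurrences_step, l.ladder_lt (n + 1)]
  · grind [occurrences_mark]

lemma eq_first_of_occurrences_eq_three {e : Gadget A} {a : A}
    (he : occurrences (entries p) e a = 3) : ∃ l, e = first l ∧ l.1 = a := by
  rcases e with ⟨x, y, h⟩ | l | ⟨l, n⟩ | _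
  · grind [occurrences_lt]
  · grind [occurrences_first]
  · grind [occurrences_step, l.ladder_lt n]
  · grind [occurrences_mark]

lemma eq_step_of_occurrences_eq_one {e : Gadget A} {a : A}
    (he : occurrences (entries p) e a = 1) : ∃ l n, e = step l n ∧ l.1 = a := by
  rcases e with ⟨x, y, h⟩ | l | ⟨l, n⟩ | _
  · grind [occurrences_lt]
  · grind [occurrences_first]
  · grind [occurrences_step]
  · grind [occurrences_mark]

lemma eq_or_eq_top_of_occurrences_eq_four {e : Gadget A} {a : A}
    (he : occurrences (entries p) e a = 4) : a = p ∨ a = ⊤ := by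
  rcases e with ⟨x, y, h⟩ | l | ⟨l, n⟩ | _
  · grind [occurrences_lt]
  · grind [occurrences_first]
  · grind [occurrences_step]
  · grind [occurrences_mark]

lemma exists_entries_eq (p a : A) : ∃ e i, entries p e i = a := by
  obtain rfl | ha := eq_or_ne a ⊤
  · exact ⟨mark, 4, rfl⟩
  · exact ⟨lt a ⊤ ha.lt_top, 0, rfl⟩

end Occurrences

/-- An injective encoding of gadgets, used to count them. -/
noncomputable def code [OrderTop A] : Gadget A → A × A × ℕ
  | lt x y _ => (x, y, 0)
  | mark => (⊤, ⊤, 0)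
  | first l => (l.1, l.1, 1)
  | step l n => (l.1, l.1, n + 2)

lemma code_injective [OrderTop A] : Injective (code : Gadget A → A × A × ℕ) := by
  rintro (⟨x, y, h⟩ | l | ⟨l, n⟩ | _) (⟨x', y', h'⟩ | l' | ⟨l', n'⟩ | _) heq <;>
    simp only [code, Prod.mk.injEq] at heq <;> grind

lemma mk_gadget_le [OrderTop A] {α : Cardinal.{u}} (hα : ℵ₀ ≤ α) (hA : #A ≤ α) :
    #(Gadget A) ≤ α := by
  calc #(Gadget A) ≤ #(A × A × ℕ) := mk_le_of_injective code_injective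
    _ = #A * (#A * ℵ₀) := by simp
    _ ≤ α * (α * α) := by gcongr
    _ = α := by rw [mul_eq_self hα, mul_eq_self hα]

end Gadget

section Rigid

variable [OrderTop A] {p p' : A}

/-- The graph that encodes the order of `A`, its ladders, and the marked element `p`. -/
noncomputable def ladderGraph (p : A) : SimpleGraph (A ⊕ Gadget A × Fin 8) :=
  cliqueGraph (Gadget.entries p)

open Gadget

lemma ladderGraph_connected (p : A) : (ladderGraph p).Connected := by
  have entry_reachable (e i j) :
      (ladderGraph p).Reachable (.inl (entries p e i)) (.inr (e, j)) := by
    have hi : (ladderGraph p).Adj (.inl (entries p e i)) (.inr (e, i)) := rfl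
    obtain rfl | hij := eq_or_ne i j
    · exact hi.reachable
    · exact hi.reachable.trans
        (show (ladderGraph p).Adj (.inr (e, i)) (.inr (e, j)) from ⟨rfl, hij⟩).reachable
  have element_reachable (a : A) : (ladderGraph p).Reachable (.inl ⊤) (.inl a) := by
    obtain rfl | ha := eq_or_ne a ⊤
    · rfl
    · exact (entry_reachable (lt a ⊤ ha.lt_top) 2 0).trans
        (entry_reachable (lt a ⊤ ha.lt_top) 0 0).symm
  refine SimpleGraph.connected_iff_exists_forall_reachable _ |>.2 ⟨.inl ⊤, ?_⟩
  rintro (a | ⟨e, i⟩)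
  · exact element_reachable a
  · exact (element_reachable _).trans (entry_reachable e 0 i)

/-- Preservation, up to renaming, of the multiplicities in all gadgets. -/
abbrev PreservesOccurrences (p p' : A) (φ : A → A) : Prop :=
  ∀ e, ∃ e', ∀ a, occurrences (entries p') e' (φ a) = occurrences (entries p) e a

lemma strictMono_of_preservesOccurrences {φ : A → A} (h : PreservesOccurrences p p' φ) :
    StrictMono φ := by
  intro x y hxy
  obtain ⟨e, he⟩ := h (lt x y hxy)
  have hy := he y
  have hx := he x
  rw [occurrences_lt] at hx hy
  obtain ⟨x', hx', rfl⟩ := eq_lt_of_occurrences_eq_six (p := p') (e := e) (a := φ y)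
    (by grind)
  rw [occurrences_lt] at hx
  grind

lemma map_ladder_of_preservesOccurrences {φ : A → A} (h : PreservesOccurrences p p' φ)
    (l : OmegaLimit A) :
    ∃ l' : OmegaLimit A, φ l.1 = l'.1 ∧ ∀ n, φ (l.ladder n) = l'.ladder n := by
  obtain ⟨e, he⟩ := h (first l)
  have hl := he l.1
  have h0 := he (l.ladder 0)
  rw [occurrences_first] at hl h0
  obtain ⟨l', rfl, hl'⟩ := eq_first_of_occurrences_eq_three (p := p') (e := e) (a := φ l.1)
    (by grind [l.ladder_lt 0])
  rw [occurrences_first] at h0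
  refine ⟨l', hl'.symm, fun n => ?_⟩
  induction n with
  | zero => grind [l.ladder_lt 0]
  | succ n ih =>
    obtain ⟨e, he⟩ := h (step l n)
    have hl := he l.1
    have hn := he (l.ladder n)
    have hsucc := he (l.ladder (n + 1))
    rw [occurrences_step] at hl hn hsucc
    obtain ⟨l'', n', rfl, hl''⟩ := eq_step_of_occurrences_eq_one (p := p') (e := e) (a := φ l.1)
      (by grind [l.ladder_lt n, l.ladder_lt (n + 1)])
    obtain rfl : l'' = l' := Subtype.ext (hl''.trans hl'.symm)
    rw [occurrences_step] at hn hsucc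
    have hrung : l''.ladder n' = l''.ladder n := by
      grind [l.ladder_lt n, l.ladder_lt_succ n]
    obtain rfl : n' = n := l''.strictMono_ladder.injective hrung
    grind [l.ladder_lt (n' + 1), l.ladder_lt_succ n']

theorem eq_of_ladderGraph_isContained [WellFoundedLT A] (hp : p ≠ ⊤) (hp' : p' ≠ ⊤)
    (h : ladderGraph p ⊑ ladderGraph p') : p = p' := by
  obtain ⟨φ, -, hφ⟩ := exists_injective_of_copy
    (fun e a => by rw [Nat.card_fin]; grind [occurrences_le_six hp' e a])
    (exists_entries_eq p) h
  have hid := eq_self_of_strictMono_of_map_ladder (strictMono_of_preservesOccurrences hφ)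
    (map_ladder_of_preservesOccurrences hφ)
  obtain ⟨e, he⟩ := hφ mark
  refine (eq_or_eq_top_of_occurrences_eq_four (p := p') (e := e) ?_).resolve_right hp
  calc occurrences (entries p') e p = occurrences (entries p) mark p := by
        simpa only [hid] using he p
    _ = 4 := by rw [occurrences_mark]; grind

end Rigid

theorem exists_connected_graphs_antichain {α : Cardinal.{u}} (hα : ℵ₀ ≤ α) :
    ∃ (P B : Type u) (G : P → SimpleGraph B), #P = α ∧ #B ≤ α ∧
      (∀ p, (G p).Connected) ∧ ∀ p p', G p ⊑ G p' → p = p' := by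
  let P := α.ord.ToType
  have hP : #P = α := mk_ord_toType α
  have hA : #(WithTop P) ≤ α := by
    rw [show #(WithTop P) = #P + 1 from mk_option, hP, add_one_eq hα]
  refine ⟨P, WithTop P ⊕ Gadget (WithTop P) × Fin 8, fun p => ladderGraph (p : WithTop P), hP, ?_,
    fun p => ladderGraph_connected _, fun p p' h => WithTop.coe_injective
      (eq_of_ladderGraph_isContained WithTop.coe_ne_top WithTop.coe_ne_top h)⟩
  calc #(WithTop P ⊕ Gadget (WithTop P) × Fin 8)
      = #(WithTop P) + #(Gadget (WithTop P)) * 8 := by simp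
    _ ≤ α + α * α := by
      gcongr
      · exact Gadget.mk_gadget_le hα hA
      · exact (ofNat_le_aleph0 (n := 8)).trans hα
    _ = α := by rw [mul_eq_self hα, add_eq_self hα]

end LadderGraph

section Cells

open Set Topology Function
open scoped BoundedContinuousFunction

variable {V : Type u}

/-- Coordinates of the ambient space of the webs over `V`: one for each vertex, and one for each
ordered pair of vertices. -/
inductive Coord (V : Type u) : Type u
  | vertex (v : V)
  | edge (u v : V)

instance : TopologicalSpace (Coord V) := ⊥

instance : DiscreteTopology (Coord V) := ⟨rfl⟩

/-- The ambient metric space of the webs over `V`: bounded families with the sup norm. -/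
abbrev WebAmbient (V : Type u) : Type u := Coord V →ᵇ ℂ

namespace WebAmbient

lemma isOpen_coord_ne_zero (j : Coord V) : IsOpen {x : WebAmbient V | x j ≠ 0} :=
  isOpen_ne.preimage (continuous_eval_const j : Continuous fun x : WebAmbient V => x j)

open Classical in
/-- The basis vector at the coordinate `j`. -/
noncomputable def single (j : Coord V) : WebAmbient V :=
  .ofNormedAddCommGroupDiscrete (fun i => if i = j then 1 else 0) 1
    (by intro i; split_ifs <;> simp)

open Classical in
lemma single_apply (j i : Coord V) : single j i = if i = j then 1 else 0 := rfl

/-- The point of the ambient space that represents the vertex `v`. -/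
noncomputable abbrev point (v : V) : WebAmbient V := single (.vertex v)

lemma point_vertex_ne_zero_iff {v w : V} : point v (.vertex w) ≠ 0 ↔ w = v := by
  simp [single_apply]

lemma point_injective : Injective (point : V → WebAmbient V) := fun _ _ h =>
  point_vertex_ne_zero_iff.1 (h ▸ point_vertex_ne_zero_iff.2 rfl)

/-- The plane through the points of `u` and `v`, parametrised so that these have parameters `0`
and `1`, and bent in a direction of its own so that different planes meet only at vertices. -/
noncomputable def cell (u v : V) (z : ℂ) : WebAmbient V :=
  (1 - z) • point u + z • point v + (z * (1 - z)) • single (.edge u v)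

lemma continuous_cell (u v : V) : Continuous (cell u v) := by
  unfold cell; fun_prop

lemma cell_zero (u v : V) : cell u v 0 = point u := by simp [cell]

lemma cell_one (u v : V) : cell u v 1 = point v := by simp [cell]

open Classical in
lemma cell_vertex (u v w : V) (z : ℂ) : cell u v z (.vertex w) =
    (1 - z) * (if w = u then 1 else 0) + z * (if w = v then 1 else 0) := by
  simp [cell, single_apply]

open Classical in
lemma cell_edge (u v a b : V) (z : ℂ) :
    cell u v z (.edge a b) = if a = u ∧ b = v then z * (1 - z) else 0 := by
  simp [cell, single_apply]

lemma cell_edge_ne_zero_iff {u v a b : V} {z : ℂ} :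
    cell u v z (.edge a b) ≠ 0 ↔ (a = u ∧ b = v) ∧ z ≠ 0 ∧ z ≠ 1 := by
  simp only [cell_edge, ne_eq, ite_eq_right_iff, mul_eq_zero, sub_eq_zero, eq_comm (a := (1 : ℂ))]
  tauto

lemma eq_or_eq_of_cell_vertex_ne_zero {u v w : V} {z : ℂ} (h : cell u v z (.vertex w) ≠ 0) :
    w = u ∨ w = v := by
  contrapose! h
  simp [cell_vertex, h]

lemma exists_cell_vertex_ne_zero (u v : V) (z : ℂ) : ∃ w, cell u v z (.vertex w) ≠ 0 := by
  obtain rfl | huv := eq_or_ne u v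
  · exact ⟨u, by simp [cell_vertex]⟩
  · obtain rfl | hz := eq_or_ne z 0
    · exact ⟨u, by simp [cell_vertex, huv]⟩
    · exact ⟨v, by simpa [cell_vertex, huv.symm] using hz⟩

lemma leftInverse_cell {u v : V} (h : u ≠ v) :
    LeftInverse (fun x : WebAmbient V => x (.vertex v)) (cell u v) := fun z => by
  simp [cell_vertex, h.symm]

lemma isClosed_range_cell {u v : V} (h : u ≠ v) : IsClosed (range (cell u v)) :=
  (leftInverse_cell h).isClosed_range (continuous_eval_const _) (continuous_cell u v)

lemma eq_or_eq_of_point_mem_range_cell {u v w : V} (h : point w ∈ range (cell u v)) :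
    w = u ∨ w = v := by
  obtain ⟨z, hz⟩ := h
  exact eq_or_eq_of_cell_vertex_ne_zero (hz ▸ point_vertex_ne_zero_iff.2 rfl)

/-- The vertices form a discrete set, hence so do their preimages under an injection. -/
lemma countable_preimage_range_point {T : Type*} [TopologicalSpace T] [SecondCountableTopology T]
    {h : T → WebAmbient V} (hc : Continuous h) (hi : Injective h) :
    (h ⁻¹' range point).Countable := by
  have hdiscrete : DiscreteTopology (h ⁻¹' range point) := by
    refine discreteTopology_subtype_iff'.2 fun x ⟨v, hv⟩ =>
      ⟨_, (isOpen_coord_ne_zero (.vertex v)).preimage hc, ?_⟩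
    ext y
    constructor
    · rintro ⟨hy, w, hw⟩
      have hvw : v = w := point_vertex_ne_zero_iff.1 (by rwa [hw])
      exact hi (by rw [← hw, ← hv, hvw])
    · rintro rfl
      refine ⟨?_, v, hv⟩
      change h y (.vertex v) ≠ 0
      rw [← hv, point_vertex_ne_zero_iff]
  exact TopologicalSpace.separableSpace_iff_countable.1 inferInstance

end WebAmbient

end Cells

section PlaneWeb

open Set Topology Function WebAmbient

variable {V V' : Type u} {D : V → V → Set ℂ} {D' : V' → V' → Set ℂ}

/-- The space glued from the subsets `D u v` of the plane by identifying, whenever these are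
present, the parameter `0` of `D u v` with the vertex `u` and the parameter `1` with `v`. -/
def planeWeb (D : V → V → Set ℂ) : Set (WebAmbient V) :=
  {x | ∃ u v, ∃ z ∈ D u v, cell u v z = x}

lemma ne_of_nonempty (hD : ∀ v, D v v = ∅) {u v : V} (h : (D u v).Nonempty) : u ≠ v := by
  rintro rfl
  simp [hD] at h

lemma exists_cell_eq_of_edge_ne_zero {x : WebAmbient V} (hx : x ∈ planeWeb D) {u v : V}
    (h : x (.edge u v) ≠ 0) : ∃ z ∈ D u v, cell u v z = x := by
  obtain ⟨u, v, z, hz, rfl⟩ := hx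
  obtain ⟨⟨rfl, rfl⟩, -⟩ := cell_edge_ne_zero_iff.1 h
  exact ⟨z, hz, rfl⟩

lemma eq_and_eq_of_edge_ne_zero {x : WebAmbient V} (hx : x ∈ planeWeb D) {u v u' v' : V}
    (h : x (.edge u v) ≠ 0) (h' : x (.edge u' v') ≠ 0) : u' = u ∧ v' = v := by
  obtain ⟨z, -, rfl⟩ := exists_cell_eq_of_edge_ne_zero hx h
  exact (cell_edge_ne_zero_iff.1 h').1

lemma mem_range_point_or_edge_ne_zero {x : WebAmbient V} (hx : x ∈ planeWeb D) :
    x ∈ range point ∨ ∃ u v, x (.edge u v) ≠ 0 := by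
  obtain ⟨u, v, z, -, rfl⟩ := hx
  obtain rfl | h0 := eq_or_ne z 0
  · exact .inl ⟨u, (cell_zero u v).symm⟩
  obtain rfl | h1 := eq_or_ne z 1
  · exact .inl ⟨v, (cell_one u v).symm⟩
  · exact .inr ⟨u, v, cell_edge_ne_zero_iff.2 ⟨⟨rfl, rfl⟩, h0, h1⟩⟩

lemma exists_edge_of_isConnected {T : Type*} [TopologicalSpace T] {h : T → WebAmbient V}
    (hc : Continuous h) (hX : ∀ z, h z ∈ planeWeb D) {C : Set T} (hconn : IsConnected C)
    (hC : ∀ z ∈ C, h z ∉ range point) : ∃ u v, ∀ z ∈ C, h z (.edge u v) ≠ 0 := by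
  obtain ⟨z₀, hz₀⟩ := hconn.nonempty
  obtain ⟨u, v, huv⟩ := (mem_range_point_or_edge_ne_zero (hX z₀)).resolve_left (hC z₀ hz₀)
  let others : Set (WebAmbient V) :=
    ⋃ (a) (b) (_ : ¬(a = u ∧ b = v)), {x | x (.edge a b) ≠ 0}
  have hothers : IsOpen others :=
    isOpen_iUnion fun a => isOpen_iUnion fun b => isOpen_iUnion fun _ => isOpen_coord_ne_zero _
  have hdisjoint : Disjoint (h ⁻¹' {x | x (.edge u v) ≠ 0}) (h ⁻¹' others) := by
    refine disjoint_left.2 fun z hz hz' => ?_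
    obtain ⟨a, b, hab, hz'⟩ := by simpa only [others, mem_preimage, mem_iUnion] using hz'
    exact hab (eq_and_eq_of_edge_ne_zero (hX z) hz hz')
  have hcover : C ⊆ h ⁻¹' {x | x (.edge u v) ≠ 0} ∪ h ⁻¹' others := by
    intro z hz
    obtain ⟨a, b, hab⟩ := (mem_range_point_or_edge_ne_zero (hX z)).resolve_left (hC z hz)
    by_cases heq : a = u ∧ b = v
    · obtain ⟨rfl, rfl⟩ := heq
      exact .inl hab
    · exact .inr (by simpa only [others, mem_preimage, mem_iUnion] using ⟨a, b, heq, hab⟩)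
  have hsub := hconn.isPreconnected.subset_left_of_subset_union
    ((isOpen_coord_ne_zero _).preimage hc) (hothers.preimage hc) hdisjoint hcover ⟨z₀, hz₀, huv⟩
  exact ⟨u, v, hsub⟩

/-- The vertices cut out only a countable set from the plane, and its complement is connected. -/
theorem exists_forall_mem_range_cell (hD : ∀ v, D v v = ∅) {h : ℂ → WebAmbient V}
    (hc : Continuous h) (hi : Injective h) (hX : ∀ z, h z ∈ planeWeb D) :
    ∃ u v, (D u v).Nonempty ∧ ∀ z, h z ∈ range (cell u v) := by
  set K := h ⁻¹' range point
  have hK : K.Countable := countable_preimage_range_point hc hi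
  have hconn : IsConnected Kᶜ := hK.isConnected_compl_of_one_lt_rank (by simp)
  obtain ⟨u, v, huv⟩ := exists_edge_of_isConnected hc hX hconn fun _ hz => hz
  have hcell (z) (hz : z ∈ Kᶜ) : ∃ w ∈ D u v, cell u v w = h z :=
    exists_cell_eq_of_edge_ne_zero (hX z) (huv z hz)
  obtain ⟨z₀, hz₀⟩ := hconn.nonempty
  obtain ⟨w₀, hw₀, -⟩ := hcell z₀ hz₀
  have hclosed : IsClosed (h ⁻¹' range (cell u v)) :=
    (isClosed_range_cell (ne_of_nonempty hD ⟨w₀, hw₀⟩)).preimage hc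
  have hdense : Dense (h ⁻¹' range (cell u v)) :=
    (hK.dense_compl ℝ).mono fun z hz => let ⟨w, _, hw⟩ := hcell z hz; ⟨w, hw⟩
  exact ⟨u, v, ⟨w₀, hw₀⟩, eq_univ_iff_forall.1 (hclosed.closure_eq.symm.trans hdense.closure_eq)⟩

/-- The inclusion of a full cell, in which no parameter is missing. -/
noncomputable def fullCell {u v : V} (h : D u v = Set.univ) (z : ℂ) : planeWeb D :=
  ⟨cell u v z, u, v, z, h ▸ mem_univ z, rfl⟩

lemma continuous_fullCell {u v : V} (h : D u v = Set.univ) : Continuous (fullCell h) :=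
  (continuous_cell u v).subtype_mk _

lemma fullCell_injective (hD : ∀ v, D v v = ∅) {u v : V} (h : D u v = Set.univ) :
    Injective (fullCell h) := fun _ _ hzw =>
  (leftInverse_cell (ne_of_nonempty hD (h ▸ univ_nonempty))).injective (congrArg Subtype.val hzw)

lemma nonempty_or_nonempty_of_fullCell (hD : ∀ v, D v v = ∅) (hD' : ∀ v, D' v v = ∅)
    {φ : planeWeb D → planeWeb D'} (hφ : Continuous φ) (hinj : Injective φ)
    {u v : V} (h : D u v = Set.univ) {a b : V'}
    (ha : (φ (fullCell h 0)).1 = point a) (hb : (φ (fullCell h 1)).1 = point b) :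
    (D' a b).Nonempty ∨ (D' b a).Nonempty := by
  obtain ⟨u', v', hne, hrange⟩ := exists_forall_mem_range_cell hD'
    (continuous_subtype_val.comp (hφ.comp (continuous_fullCell h)))
    (Subtype.val_injective.comp (hinj.comp (fullCell_injective hD h))) fun z => Subtype.prop _
  have hab : a ≠ b := by
    rintro rfl
    exact zero_ne_one (fullCell_injective hD h (hinj (Subtype.ext (ha.trans hb.symm))))
  have ha' := eq_or_eq_of_point_mem_range_cell (w := a) (u := u') (v := v') (ha ▸ hrange 0)
  have hb' := eq_or_eq_of_point_mem_range_cell (w := b) (u := u') (v := v') (hb ▸ hrange 1)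
  grind

lemma exists_fullCell_mem_ne {u v : V} (h : D u v = Set.univ) {U : Set (planeWeb D)} (hU : IsOpen U)
    {z : ℂ} (hz : fullCell h z ∈ U) : ∃ w, fullCell h w ∈ U ∧ w ≠ 0 ∧ w ≠ 1 := by
  obtain ⟨w, hwU, hw⟩ := (Countable.dense_compl ℝ (toFinite {0, 1}).countable).inter_open_nonempty
    _ (hU.preimage (continuous_fullCell h)) ⟨z, hz⟩
  exact ⟨w, hwU, by simpa using hw⟩

lemma not_countable_of_fullCell_mem (hD : ∀ v, D v v = ∅) {u v : V} (h : D u v = Set.univ)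
    {U : Set (planeWeb D)} (hU : IsOpen U) {z : ℂ} (hz : fullCell h z ∈ U) : ¬U.Countable := by
  intro hcount
  obtain ⟨w, hw, hw'⟩ := ((hcount.preimage (fullCell_injective hD h)).dense_compl ℝ)
    |>.inter_open_nonempty _ (hU.preimage (continuous_fullCell h)) ⟨z, hz⟩
  exact hw' hw

lemma not_isSeparable_of_isOpen {v : V} (hv : ¬{w | D v w = Set.univ}.Countable)
    {x : planeWeb D} (hx : x.1 = point v) {U : Set (planeWeb D)} (hU : IsOpen U) (hxU : x ∈ U) :
    ¬TopologicalSpace.IsSeparable U := by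
  intro hsep
  have := hsep.separableSpace
  refine hv (Pairwise.countable_of_isOpen_disjoint (α := U)
    (s := fun w : {w | D v w = Set.univ} => {y : U | y.1.1 (.edge v w) ≠ 0}) ?_ ?_ ?_)
  · intro w w' hne
    exact disjoint_left.2 fun y hy hy' =>
      hne (Subtype.ext (eq_and_eq_of_edge_ne_zero y.1.2 hy hy').2.symm)
  · exact fun w => (isOpen_coord_ne_zero _).preimage
      (continuous_subtype_val.comp continuous_subtype_val)
  · rintro ⟨w, hw⟩
    have h0 : fullCell hw 0 = x := Subtype.ext ((cell_zero v w).trans hx.symm)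
    obtain ⟨z, hzU, hz⟩ := exists_fullCell_mem_ne hw hU (h0 ▸ hxU)
    exact ⟨⟨_, hzU⟩, cell_edge_ne_zero_iff.2 ⟨⟨rfl, rfl⟩, hz⟩⟩

lemma exists_mem_notMem_range_cell {v : V} (hv : ¬{w | D v w = Set.univ}.Countable)
    {x : planeWeb D} (hx : x.1 = point v) {φ : planeWeb D → planeWeb D'} (hφ : IsEmbedding φ)
    {O : Set (WebAmbient V')} (hO : IsOpen O) (hxO : (φ x).1 ∈ O) (a b : V') :
    ∃ y ∈ planeWeb D', y ∈ O ∧ y ∉ range (cell a b) := by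
  by_contra! hsub
  have hψ : IsEmbedding fun y => (φ y).1 := .comp .subtypeVal hφ
  refine not_isSeparable_of_isOpen hv hx (hO.preimage hψ.continuous) hxO
    (.mono (hψ.isSeparable_preimage (TopologicalSpace.isSeparable_range (continuous_cell a b))) ?_)
  exact fun y hy => hsub _ (φ y).2 hy

end PlaneWeb

section Restriction

open Set Topology Function WebAmbient

variable {V V' : Type u} {D : V → V → Set ℂ} {D' : V' → V' → Set ℂ} {S S' : Set V}

/-- The gluing data obtained from `D` by keeping only the cells that start in `S`. -/
def restrictCells (D : V → V → Set ℂ) (S : Set V) (u v : V) : Set ℂ := {z ∈ D u v | u ∈ S}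

/-- The part of the web of `D` covered by the cells that start in `S`. -/
def webPart (D : V → V → Set ℂ) (S : Set V) : Set (planeWeb D) :=
  {x | x.1 ∈ planeWeb (restrictCells D S)}

/-- A set of vertices that is a union of connected components for the gluing data `D`. -/
def IsSaturated (D : V → V → Set ℂ) (S : Set V) : Prop :=
  ∀ u v, (D u v).Nonempty → (u ∈ S ↔ v ∈ S)

lemma IsSaturated.compl (hS : IsSaturated D S) : IsSaturated D Sᶜ :=
  fun u v h => not_congr (hS u v h)

lemma planeWeb_restrictCells_subset : planeWeb (restrictCells D S) ⊆ planeWeb D :=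
  fun _ ⟨u, v, z, hz, hx⟩ => ⟨u, v, z, hz.1, hx⟩

lemma exists_vertex_ne_zero {x : WebAmbient V} (hx : x ∈ planeWeb D) :
    ∃ w, x (.vertex w) ≠ 0 := by
  obtain ⟨u, v, z, -, rfl⟩ := hx
  exact exists_cell_vertex_ne_zero u v z

lemma mem_webPart_iff (hS : IsSaturated D S) {x : planeWeb D} {w : V}
    (hw : x.1 (.vertex w) ≠ 0) : x ∈ webPart D S ↔ w ∈ S := by
  have hstart : ∀ {u v z}, z ∈ D u v → cell u v z = x.1 → (u ∈ S ↔ w ∈ S) := by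
    intro u v z hz hx
    obtain rfl | rfl := eq_or_eq_of_cell_vertex_ne_zero (hx ▸ hw)
    · rfl
    · exact hS _ _ ⟨z, hz⟩
  constructor
  · rintro ⟨u, v, z, ⟨hz, hu⟩, hx⟩
    exact (hstart hz hx).1 hu
  · intro hwS
    obtain ⟨u, v, z, hz, hx⟩ := x.2
    exact ⟨u, v, z, ⟨hz, (hstart hz hx).2 hwS⟩, hx⟩

lemma isOpen_webPart (hS : IsSaturated D S) : IsOpen (webPart D S) := by
  have hunion : webPart D S = ⋃ w ∈ S, {x | x.1 (.vertex w) ≠ 0} := by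
    ext x
    simp only [mem_iUnion]
    constructor
    · intro hx
      obtain ⟨w, hw⟩ := exists_vertex_ne_zero x.2
      exact ⟨w, (mem_webPart_iff hS hw).1 hx, hw⟩
    · rintro ⟨w, hwS, hw⟩
      exact (mem_webPart_iff hS hw).2 hwS
  rw [hunion]
  exact isOpen_biUnion fun w _ => (isOpen_coord_ne_zero _).preimage continuous_subtype_val

lemma isClopen_webPart (hS : IsSaturated D S) : IsClopen (webPart D S) := by
  have hcompl : (webPart D S)ᶜ = webPart D Sᶜ := by
    ext x
    obtain ⟨w, hw⟩ := exists_vertex_ne_zero x.2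
    rw [mem_compl_iff, mem_webPart_iff hS hw, mem_webPart_iff hS.compl hw, mem_compl_iff]
  exact ⟨isOpen_compl_iff.1 (hcompl ▸ isOpen_webPart hS.compl), isOpen_webPart hS⟩

/-- A part of a web is, up to homeomorphism, the web of the restricted gluing data. -/
noncomputable def webPartHomeomorph (D : V → V → Set ℂ) (S : Set V) :
    webPart D S ≃ₜ planeWeb (restrictCells D S) :=
  (IsEmbedding.subtypeVal.homeomorphImage (webPart D S)).trans <| .setCongr <|
    (Subtype.image_preimage_coe _ _).trans (inter_eq_right.2 planeWeb_restrictCells_subset)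

lemma homeoToSubspace_iff {A B : Type*} [TopologicalSpace A] [TopologicalSpace B] :
    HomeoToSubspace A B ↔ ∃ f : A → B, IsEmbedding f :=
  ⟨fun ⟨_, ⟨e⟩⟩ => ⟨_, .comp .subtypeVal e.isEmbedding⟩,
    fun ⟨_, hf⟩ => ⟨_, ⟨hf.toHomeomorph⟩⟩⟩

lemma homeoToSubspace_webPart_iff : HomeoToSubspace (webPart D S) (webPart D S') ↔
    ∃ f : planeWeb (restrictCells D S) → planeWeb (restrictCells D S'), IsEmbedding f := by
  rw [homeoToSubspace_iff]
  exact ⟨fun ⟨f, hf⟩ => ⟨_, (webPartHomeomorph D S').isEmbedding.comp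
      (hf.comp (webPartHomeomorph D S).symm.isEmbedding)⟩,
    fun ⟨f, hf⟩ => ⟨_, (webPartHomeomorph D S').symm.isEmbedding.comp
      (hf.comp (webPartHomeomorph D S).isEmbedding)⟩⟩

end Restriction

section Relabelling

open Set Topology Function WebAmbient

variable {V V' : Type u} {D : V → V → Set ℂ} {D' : V' → V' → Set ℂ}

/-- The injection of coordinates induced by an injection of vertices. -/
def Coord.map (σ : V ↪ V') : Coord V ↪ Coord V' where
  toFun
    | .vertex v => .vertex (σ v)
    | .edge u v => .edge (σ u) (σ v)
  inj' := by rintro (_ | ⟨_, _⟩) (_ | ⟨_, _⟩) <;> simp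

lemma Coord.map_vertex (σ : V ↪ V') (v : V) : Coord.map σ (.vertex v) = .vertex (σ v) := rfl

lemma Coord.map_edge (σ : V ↪ V') (u v : V) :
    Coord.map σ (.edge u v) = .edge (σ u) (σ v) := rfl

/-- Relabelling of vertices in the ambient space, with coordinate `0` at the new vertices. -/
noncomputable def WebAmbient.relabel (σ : V ↪ V') (x : WebAmbient V) : WebAmbient V' :=
  .extend (Coord.map σ) x 0

lemma WebAmbient.isEmbedding_relabel (σ : V ↪ V') :
    IsEmbedding (relabel σ : WebAmbient V → WebAmbient V') :=
  (BoundedContinuousFunction.isometry_extend _ _).isEmbedding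

lemma WebAmbient.relabel_cell (σ : V ↪ V') (u v : V) (z : ℂ) :
    relabel σ (cell u v z) = cell (σ u) (σ v) z := by
  ext j
  by_cases hj : j ∈ range (Coord.map σ)
  · obtain ⟨i, rfl⟩ := hj
    rw [relabel, BoundedContinuousFunction.extend_apply]
    classical
    cases i <;> simp [Coord.map_vertex, Coord.map_edge, cell_vertex, cell_edge]
  · rw [relabel, BoundedContinuousFunction.extend_apply' hj]
    by_contra hne
    refine hj ?_
    match j with
    | .vertex w =>
      obtain rfl | rfl := eq_or_eq_of_cell_vertex_ne_zero (Ne.symm hne)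
      exacts [⟨.vertex u, rfl⟩, ⟨.vertex v, rfl⟩]
    | .edge a b =>
      obtain ⟨⟨rfl, rfl⟩, -⟩ := cell_edge_ne_zero_iff.1 (Ne.symm hne)
      exact ⟨.edge u v, rfl⟩

theorem exists_isEmbedding_planeWeb (σ : V ↪ V') (h : ∀ u v, D u v ⊆ D' (σ u) (σ v)) :
    ∃ f : planeWeb D → planeWeb D', IsEmbedding f := by
  have hmem : ∀ x : planeWeb D, relabel σ x.1 ∈ planeWeb D' := by
    rintro ⟨_, u, v, z, hz, rfl⟩
    exact ⟨σ u, σ v, z, h u v hz, (relabel_cell σ u v z).symm⟩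
  exact ⟨_, ((isEmbedding_relabel σ).comp .subtypeVal).codRestrict _ hmem⟩

end Relabelling

section CountableLimit

open Set Topology

/-- `x` is a limit of points that have a countable neighbourhood. -/
def IsLimitOfCountable {T : Type*} [TopologicalSpace T] (x : T) : Prop :=
  x ∈ closure {y | ∃ U, IsOpen U ∧ U.Countable ∧ y ∈ U}

lemma IsLimitOfCountable.map {T T' : Type*} [TopologicalSpace T] [TopologicalSpace T']
    (e : T ≃ₜ T') {x : T} (hx : IsLimitOfCountable x) : IsLimitOfCountable (e x) :=
  map_mem_closure e.continuous hx fun _ ⟨U, hU, hcount, hy⟩ =>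
    ⟨e '' U, e.isOpenMap U hU, hcount.image e, mem_image_of_mem e hy⟩

end CountableLimit

section GraphWeb

open Set Topology Function WebAmbient

variable {P B : Type u}

/-- The vertices of the web attached to a family, indexed by `P`, of graphs on `B`: for each
component `c`, consisting of an index and a flavour, the vertices `core c b` of the graph together
with a family of leaves at each of them. -/
inductive Site (P B : Type u) : Type u
  | core (c : P × Bool) (b : B)
  | leaf (c : P × Bool) (b : B) (k : ℝ)

/-- The component of a vertex. -/
def Site.comp : Site P B → P × Bool
  | .core c _ => c
  | .leaf c _ _ => c

/-- The cells of the web of a family of graphs: a plane for each edge, uncountably many planes at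
each core vertex, and, for flavour `true` only, a copy of `ℚ` at each core vertex. The uncountably
many planes make the core vertices recognisable, the copies of `ℚ` distinguish the flavours. -/
inductive IsArm (G : P → SimpleGraph B) : Site P B → Site P B → ℂ → Prop
  | edge {c : P × Bool} {b b' : B} (h : (G c.1).Adj b b') (z : ℂ) :
      IsArm G (.core c b) (.core c b') z
  | fat (c : P × Bool) (b : B) {k : ℝ} (hk : 0 < k) (z : ℂ) :
      IsArm G (.core c b) (.leaf c b k) z
  | thin (p : P) (b : B) (q : ℚ) : IsArm G (.core (p, true) b) (.leaf (p, true) b 0) (q : ℝ)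

lemma IsArm.exists_rat {G : P → SimpleGraph B} {c c' : P × Bool} {b b' : B} {z : ℂ}
    (h : IsArm G (.core c b) (.leaf c' b' 0) z) : ∃ q : ℚ, ((q : ℝ) : ℂ) = z := by
  cases h with
  | fat _ _ hk => exact absurd hk (lt_irrefl 0)
  | thin _ _ q => exact ⟨q, rfl⟩

/-- The gluing data of the web of a family of graphs. -/
def arms (G : P → SimpleGraph B) (u v : Site P B) : Set ℂ := {z | IsArm G u v z}

/-- The gluing data of the components in `S`. -/
def armsOver (G : P → SimpleGraph B) (S : Set (P × Bool)) : Site P B → Site P B → Set ℂ :=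
  restrictCells (arms G) (Site.comp ⁻¹' S)

variable {G : P → SimpleGraph B} {S S' : Set (P × Bool)} {c : P × Bool} {b b' : B}

lemma isSaturated_comp_preimage : IsSaturated (arms G) (Site.comp ⁻¹' S) := by
  rintro _ _ ⟨_, _ | _ | _⟩ <;> rfl

lemma armsOver_self (v : Site P B) : armsOver G S v v = ∅ := by
  refine eq_empty_of_forall_notMem fun z hz => ?_
  obtain ⟨h | _ | _, -⟩ := hz
  exact h.ne rfl

lemma armsOver_edge (hc : c ∈ S) (h : (G c.1).Adj b b') :
    armsOver G S (.core c b) (.core c b') = Set.univ :=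
  eq_univ_of_forall fun z => ⟨.edge h z, hc⟩

lemma armsOver_fat (hc : c ∈ S) (b : B) {k : ℝ} (hk : 0 < k) :
    armsOver G S (.core c b) (.leaf c b k) = Set.univ :=
  eq_univ_of_forall fun z => ⟨.fat c b hk z, hc⟩

lemma armsOver_eq_univ {u v : Site P B} {z : ℂ} (h : z ∈ armsOver G S u v)
    (hu : u.comp.2 = false) : armsOver G S u v = Set.univ := by
  obtain ⟨hadj | ⟨_, _, hk⟩ | _, hS⟩ := h
  · exact armsOver_edge hS hadj
  · exact armsOver_fat hS _ hk
  · cases hu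

lemma not_countable_armsOver_eq_univ (hc : c ∈ S) (b : B) :
    ¬{w | armsOver G S (.core c b) w = Set.univ}.Countable := by
  intro hcount
  have hinj : Injective fun k : ℝ => (.leaf c b (Real.exp k) : Site P B) :=
    fun k l h => by simpa using h
  exact not_countable_univ (α := ℝ) ((hcount.preimage hinj).mono fun k _ =>
    armsOver_fat hc b (Real.exp_pos k))

lemma comp_mem_of_vertex_ne_zero {x : WebAmbient (Site P B)} (hx : x ∈ planeWeb (armsOver G S))
    {w : Site P B} (hw : x (.vertex w) ≠ 0) : w.comp ∈ S :=
  (mem_webPart_iff isSaturated_comp_preimage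
    (x := ⟨x, planeWeb_restrictCells_subset hx⟩) hw).1 hx

/-- The point of the vertex `core c b` in the web of the components in `S`. -/
noncomputable def corePoint (hc : c ∈ S) (b : B) : planeWeb (armsOver G S) :=
  fullCell (armsOver_fat hc b one_pos) 0

lemma coe_corePoint (hc : c ∈ S) (b : B) :
    (corePoint hc b : planeWeb (armsOver G S)).1 = point (.core c b) :=
  cell_zero _ _

lemma mem_range_cell_of_leaf_ne_zero {x : WebAmbient (Site P B)}
    (hx : x ∈ planeWeb (armsOver G S)) {k : ℝ} (h : x (.vertex (.leaf c b k)) ≠ 0) :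
    x ∈ range (cell (.core c b) (.leaf c b k)) := by
  obtain ⟨u, v, z, ⟨hz, -⟩, rfl⟩ := hx
  rcases hz with _ | _ | _ <;> obtain hw | hw := eq_or_eq_of_cell_vertex_ne_zero h <;>
    cases hw <;> exact mem_range_self _

/-- No neighbourhood of a core point embeds in a single cell, while every other point has a
neighbourhood contained in one. -/
lemma exists_eq_corePoint {φ : planeWeb (armsOver G S) → planeWeb (armsOver G S')}
    (hφ : IsEmbedding φ) (hc : c ∈ S) (b : B) :
    ∃ (c' : P × Bool) (hc' : c' ∈ S') (b' : B), φ (corePoint hc b) = corePoint hc' b' := by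
  have hcells {O} (hO : IsOpen O) := exists_mem_notMem_range_cell
    (not_countable_armsOver_eq_univ hc b) (coe_corePoint hc b) hφ hO
  obtain ⟨w, hw⟩ | ⟨u, v, huv⟩ := mem_range_point_or_edge_ne_zero (φ (corePoint hc b)).2
  · have hne : (φ (corePoint hc b)).1 (.vertex w) ≠ 0 := hw ▸ point_vertex_ne_zero_iff.2 rfl
    match w with
    | .core c' b' =>
      have hc' : c' ∈ S' := comp_mem_of_vertex_ne_zero (φ _).2 hne
      exact ⟨c', hc', b', Subtype.ext (hw.symm.trans (coe_corePoint hc' b').symm)⟩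
    | .leaf c' b' k =>
      obtain ⟨y, hy, hne', hrange⟩ := hcells (isOpen_coord_ne_zero _) hne _ _
      exact absurd (mem_range_cell_of_leaf_ne_zero hy hne') hrange
  · obtain ⟨y, hy, hne, hrange⟩ := hcells (isOpen_coord_ne_zero _) huv u v
    obtain ⟨z, -, hz⟩ := exists_cell_eq_of_edge_ne_zero hy hne
    exact absurd ⟨z, hz⟩ hrange

lemma corePoint_eq_iff {c' : P × Bool} {hc : c ∈ S} {hc' : c' ∈ S} :
    (corePoint hc b : planeWeb (armsOver G S)) = corePoint hc' b' ↔ c = c' ∧ b = b' := by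
  rw [Subtype.ext_iff, coe_corePoint, coe_corePoint, point_injective.eq_iff, Site.core.injEq]

lemma adj_of_nonempty_armsOver {c' : P × Bool}
    (h : (armsOver G S (.core c b) (.core c' b')).Nonempty) : c = c' ∧ (G c.1).Adj b b' := by
  obtain ⟨_, hadj | _ | _, -⟩ := h
  exact ⟨rfl, hadj⟩

lemma adj_of_map_corePoint {φ : planeWeb (armsOver G S) → planeWeb (armsOver G S')}
    (hφ : IsEmbedding φ) {hc : c ∈ S} (h : (G c.1).Adj b b') {c₁ c₂ : P × Bool} {hc₁ : c₁ ∈ S'}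
    {hc₂ : c₂ ∈ S'} {b₁ b₂ : B} (h₁ : φ (corePoint hc b) = corePoint hc₁ b₁)
    (h₂ : φ (corePoint hc b') = corePoint hc₂ b₂) : c₁ = c₂ ∧ (G c₁.1).Adj b₁ b₂ := by
  have hfull := armsOver_edge hc h
  have hzero : fullCell hfull 0 = corePoint hc b :=
    Subtype.ext ((cell_zero _ _).trans (coe_corePoint hc b).symm)
  have hone : fullCell hfull 1 = corePoint hc b' :=
    Subtype.ext ((cell_one _ _).trans (coe_corePoint hc b').symm)
  obtain harm | harm := nonempty_or_nonempty_of_fullCell armsOver_self armsOver_self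
    hφ.continuous hφ.injective hfull (by rw [hzero, h₁, coe_corePoint])
    (by rw [hone, h₂, coe_corePoint])
  · exact adj_of_nonempty_armsOver harm
  · obtain ⟨rfl, hadj⟩ := adj_of_nonempty_armsOver harm
    exact ⟨rfl, hadj.symm⟩

theorem exists_copy_of_isEmbedding {φ : planeWeb (armsOver G S) → planeWeb (armsOver G S')}
    (hφ : IsEmbedding φ) (hc : c ∈ S) (hconn : (G c.1).Connected) :
    ∃ (c' : P × Bool) (hc' : c' ∈ S') (f : SimpleGraph.Copy (G c.1) (G c'.1)),
      ∀ b, φ (corePoint hc b) = corePoint hc' (f b) := by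
  choose c' hc' f hf using exists_eq_corePoint hφ hc
  have hadj {b b'} (h : (G c.1).Adj b b') : c' b = c' b' ∧ (G (c' b).1).Adj (f b) (f b') :=
    adj_of_map_corePoint hφ h (hf b) (hf b')
  obtain ⟨b₀⟩ := hconn.nonempty
  have hconst : c' = fun _ => c' b₀ := by
    ext1 b
    obtain ⟨walk⟩ := hconn.preconnected b b₀
    induction walk with
    | nil => rfl
    | cons h _ ih => exact (hadj h).1.trans ih
  obtain ⟨c₀, rfl⟩ : ∃ c₀, c' = fun _ => c₀ := ⟨_, hconst⟩
  refine ⟨c₀, hc' b₀, ⟨⟨f, fun h => (hadj h).2⟩, fun b b' h => ?_⟩, hf⟩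
  have heq : φ (corePoint hc b) = φ (corePoint hc b') := by
    rw [hf, hf, corePoint_eq_iff]
    exact ⟨rfl, h⟩
  exact (corePoint_eq_iff.1 (hφ.injective heq)).2

lemma isLimitOfCountable_corePoint {p : P} (hc : (p, true) ∈ S) (b : B) :
    IsLimitOfCountable (corePoint hc b : planeWeb (armsOver G S)) := by
  let u : Site P B := .core (p, true) b
  let v : Site P B := .leaf (p, true) b 0
  let h (q : ℚ) : planeWeb (armsOver G S) :=
    ⟨cell u v (q : ℝ), u, v, (q : ℝ), ⟨.thin p b q, hc⟩, rfl⟩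
  have hcont : Continuous h := ((continuous_cell u v).comp
    (Complex.continuous_ofReal.comp Rat.continuous_coe_real)).subtype_mk _
  have hzero : h 0 = corePoint hc b := by
    refine Subtype.ext (Eq.trans ?_ (coe_corePoint hc b).symm)
    simp only [h, Rat.cast_zero, Complex.ofReal_zero, cell_zero, u]
  have hdense : Dense (Set.univ \ {0, 1} : Set ℚ) := dense_univ.sdiff_finite (toFinite {0, 1})
  rw [← hzero]
  refine map_mem_closure hcont (hdense 0) fun q hq => ?_
  refine ⟨{x | x.1 (.edge u v) ≠ 0}, (isOpen_coord_ne_zero _).preimage continuous_subtype_val,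
    (countable_range h).mono fun x hx => ?_, cell_edge_ne_zero_iff.2 ⟨⟨rfl, rfl⟩, ?_⟩⟩
  · obtain ⟨z, ⟨hz, -⟩, hzx⟩ := exists_cell_eq_of_edge_ne_zero x.2 hx
    obtain ⟨q, rfl⟩ := IsArm.exists_rat hz
    exact ⟨q, Subtype.ext hzx⟩
  · have hq' : q ≠ 0 ∧ q ≠ 1 := by simpa using hq
    exact_mod_cast hq'

lemma not_isLimitOfCountable_corePoint {p : P} (hc : (p, false) ∈ S) (b : B) :
    ¬IsLimitOfCountable (corePoint hc b : planeWeb (armsOver G S)) := by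
  intro hlim
  have hnhds : (corePoint hc b : planeWeb (armsOver G S)) ∈
      {x | x.1 (.vertex (.core (p, false) b)) ≠ 0} := by
    rw [mem_ofPred_eq, coe_corePoint, point_vertex_ne_zero_iff]
  obtain ⟨⟨_, u, v, z, hz, rfl⟩, hne, U, hU, hcount, hxU⟩ := mem_closure_iff.1 hlim _
    ((isOpen_coord_ne_zero _).preimage continuous_subtype_val) hnhds
  have hu : u.comp = (p, false) := by
    obtain rfl | rfl := eq_or_eq_of_cell_vertex_ne_zero hne
    · rfl
    · obtain ⟨_ | _ | _, -⟩ := hz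
      rfl
  have hfull := armsOver_eq_univ hz (by rw [hu])
  exact not_countable_of_fullCell_mem armsOver_self hfull hU (z := z) hxU hcount

lemma isLimitOfCountable_corePoint_iff (hc : c ∈ S) (b : B) :
    IsLimitOfCountable (corePoint hc b : planeWeb (armsOver G S)) ↔ c.2 = true := by
  obtain ⟨p, _ | _⟩ := c
  · exact iff_of_false (not_isLimitOfCountable_corePoint hc b) Bool.false_ne_true
  · exact iff_of_true (isLimitOfCountable_corePoint hc b) rfl

end GraphWeb

section Representation

open Set Topology Function WebAmbient
open scoped SimpleGraph

variable {P B Q : Type u} {G : P → SimpleGraph B}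

lemma exists_isEmbedding_of_toggle {S S' : Set (P × Bool)} (toggle : P → Bool)
    (h : ∀ c ∈ S, (c.1, xor c.2 (toggle c.1)) ∈ S') :
    ∃ f : planeWeb (armsOver G S) → planeWeb (armsOver G S'), IsEmbedding f := by
  let t (c : P × Bool) : P × Bool := (c.1, xor c.2 (toggle c.1))
  have ht : Injective t := by
    rintro ⟨p, i⟩ ⟨p', i'⟩ hcc
    obtain ⟨rfl, hi⟩ := Prod.mk.inj hcc
    exact congrArg (Prod.mk p) (Bool.xor_left_inj.1 hi)
  -- The exponential turns every leaf into one whose cell is a full plane.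
  let σ : Site P B ↪ Site P B :=
    { toFun
        | .core c b => .core (t c) b
        | .leaf c b k => .leaf (t c) b (Real.exp k)
      inj' := by rintro (_ | _) (_ | _) hσ <;> simp_all [ht.eq_iff] }
  refine exists_isEmbedding_planeWeb σ fun u v z ⟨harm, hS⟩ => ?_
  rcases harm with hadj | _ | _
  · exact ⟨.edge (c := t _) hadj z, h _ hS⟩
  · exact ⟨.fat _ _ (Real.exp_pos _) z, h _ hS⟩
  · exact ⟨.fat _ _ (Real.exp_pos _) _, h _ hS⟩

open Classical in
/-- The components of the space representing `q`: one for each `r` below `q`, with flavour `true`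
precisely for `q` itself. -/
def componentsBelow (le : Q → Q → Prop) (ι : Q → P) (q : Q) : Set (P × Bool) :=
  {c | ∃ r, le r q ∧ c = (ι r, decide (r = q))}

lemma mem_componentsBelow_self {le : Q → Q → Prop} (ι : Q → P) {q : Q} (h : le q q) :
    (ι q, true) ∈ componentsBelow le ι q :=
  ⟨q, h, by simp⟩

open Classical in
lemma exists_isEmbedding_componentsBelow {le : Q → Q → Prop}
    (htrans : ∀ a b c, le a b → le b c → le a c) (ι : Q ↪ P) {q q' : Q} (h : le q q') :
    ∃ f : planeWeb (armsOver G (componentsBelow le ι q)) →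
      planeWeb (armsOver G (componentsBelow le ι q')), IsEmbedding f := by
  refine exists_isEmbedding_of_toggle
    (fun p => xor (decide (p = ι q)) (decide (p = ι q'))) ?_
  rintro _ ⟨r, hr, rfl⟩
  exact ⟨r, htrans r q q' hr h, by simp⟩

theorem exists_eq_corePoint_of_antichain (hconn : ∀ p, (G p).Connected)
    (hanti : ∀ p p', G p ⊑ G p' → p = p') {S S' : Set (P × Bool)}
    {φ : planeWeb (armsOver G S) → planeWeb (armsOver G S')} (hφ : IsEmbedding φ)
    {c : P × Bool} (hc : c ∈ S) (b : B) :
    ∃ (c' : P × Bool) (hc' : c' ∈ S') (b' : B),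
      c.1 = c'.1 ∧ φ (corePoint hc b) = corePoint hc' b' := by
  obtain ⟨c', hc', f, hf⟩ := exists_copy_of_isEmbedding hφ hc (hconn c.1)
  exact ⟨c', hc', f b, hanti _ _ ⟨f⟩, hf b⟩

lemma le_of_isEmbedding_componentsBelow (hconn : ∀ p, (G p).Connected)
    (hanti : ∀ p p', G p ⊑ G p' → p = p') {le : Q → Q → Prop} (ι : Q ↪ P) {q q' : Q}
    (hq : le q q) {φ : planeWeb (armsOver G (componentsBelow le ι q)) →
      planeWeb (armsOver G (componentsBelow le ι q'))} (hφ : IsEmbedding φ) : le q q' := by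
  obtain ⟨b⟩ := (hconn (ι q)).nonempty
  obtain ⟨_, ⟨r, hr, rfl⟩, -, hqr, -⟩ :=
    exists_eq_corePoint_of_antichain hconn hanti hφ (mem_componentsBelow_self ι hq) b
  obtain rfl := ι.injective hqr
  exact hr

lemma eq_of_homeomorph_componentsBelow (hconn : ∀ p, (G p).Connected)
    (hanti : ∀ p p', G p ⊑ G p' → p = p') {le : Q → Q → Prop} (ι : Q ↪ P) {q q' : Q}
    (hq : le q q) (e : planeWeb (armsOver G (componentsBelow le ι q)) ≃ₜ
      planeWeb (armsOver G (componentsBelow le ι q'))) : q = q' := by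
  obtain ⟨b⟩ := (hconn (ι q)).nonempty
  have hc := mem_componentsBelow_self ι hq
  obtain ⟨_, ⟨r, hr, rfl⟩, b', hqr, heq⟩ :=
    exists_eq_corePoint_of_antichain hconn hanti e.isEmbedding hc b
  obtain rfl := ι.injective hqr
  have hlim := ((isLimitOfCountable_corePoint_iff hc b).2 rfl).map e
  classical exact of_decide_eq_true ((isLimitOfCountable_corePoint_iff _ b').1 (heq ▸ hlim))

theorem representsByEmb_planeWeb_arms (hconn : ∀ p, (G p).Connected)
    (hanti : ∀ p p', G p ⊑ G p' → p = p') : RepresentsByEmb #P (planeWeb (arms G)) := by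
  intro Q le hQ hrefl htrans
  obtain ⟨ι⟩ := hQ
  refine ⟨fun q => webPart (arms G) (Site.comp ⁻¹' componentsBelow le ι q),
    fun q => isClopen_webPart isSaturated_comp_preimage, fun q q' hne => ⟨fun e => hne ?_⟩,
    fun q q' => Iff.trans ⟨?_, ?_⟩ homeoToSubspace_webPart_iff.symm⟩
  · exact eq_of_homeomorph_componentsBelow hconn hanti ι (hrefl q)
      ((webPartHomeomorph _ _).symm.trans (e.trans (webPartHomeomorph _ _)))
  · exact exists_isEmbedding_componentsBelow htrans ι
  · rintro ⟨φ, hφ⟩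
    exact le_of_isEmbedding_componentsBelow hconn hanti ι (hrefl q) hφ

end Representation

section Cardinality

open Set Function WebAmbient

lemma mk_planeWeb_le {V : Type u} (D : V → V → Set ℂ) : #(planeWeb D) ≤ #V * (#V * 𝔠) := by
  have hsub : planeWeb D ⊆ range fun t : V × V × ℂ => cell t.1 t.2.1 t.2.2 :=
    fun _ ⟨u, v, z, _, hx⟩ => ⟨(u, v, z), hx⟩
  refine ((mk_le_mk_of_subset hsub).trans mk_range_le).trans_eq ?_
  simp

lemma mk_site_le (P B : Type u) : #(Site P B) ≤ #P * 2 * (#B * 𝔠) := by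
  let code : Site P B → (P × Bool) × B × Option ℝ
    | .core c b => (c, b, none)
    | .leaf c b k => (c, b, some k)
  have hcode : Injective code := by rintro (_ | _) (_ | _) <;> simp [code]
  simpa [mk_real, add_one_eq aleph0_le_continuum] using mk_le_of_injective hcode

lemma mk_planeWeb_arms {P B : Type u} [Nonempty B] (hP : 𝔠 ≤ #P) (hB : #B ≤ #P)
    (G : P → SimpleGraph B) : #(planeWeb (arms G)) = #P := by
  have hinf : ℵ₀ ≤ #P := aleph0_le_continuum.trans hP
  apply le_antisymm
  · have hsite : #(Site P B) ≤ #P := calc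
      #(Site P B) ≤ #P * 2 * (#B * 𝔠) := mk_site_le P B
      _ ≤ #P * #P * (#P * #P) := by
        gcongr
        exact ofNat_le_aleph0.trans hinf
      _ = #P := by simp only [mul_eq_self hinf]
    calc #(planeWeb (arms G)) ≤ #(Site P B) * (#(Site P B) * 𝔠) := mk_planeWeb_le _
      _ ≤ #P * (#P * #P) := by gcongr
      _ = #P := by simp only [mul_eq_self hinf]
  · let b := Classical.arbitrary B
    let f (p : P) : planeWeb (arms G) :=
      ⟨point (.core (p, true) b), _, _, 0, .fat (p, true) b one_pos 0, cell_zero _ _⟩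
    have hf : Injective f := fun p p' h => by
      simpa using point_injective (congrArg Subtype.val h)
    exact mk_le_of_injective hf

end Cardinality

theorem statement5 (α : Cardinal.{u}) (hα : Cardinal.continuum ≤ α) :
    ∃ (X : Type u) (tX : TopologicalSpace X),
      @TopologicalSpace.MetrizableSpace X tX ∧ #X = α ∧
      @RepresentsByEmb α X tX := by
  obtain ⟨P, B, G, rfl, hB, hconn, hanti⟩ :=
    exists_connected_graphs_antichain (aleph0_le_continuum.trans hα)
  obtain ⟨p⟩ : Nonempty P := mk_ne_zero_iff.1 (continuum_pos.trans_le hα).ne'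
  have := (hconn p).nonempty
  exact ⟨planeWeb (arms G), inferInstance, inferInstance, mk_planeWeb_arms hα hB G,
    representsByEmb_planeWeb_arms hconn hanti⟩
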